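/- Let N be a weighted open chain of cycles C_1,…,C_m without bonuses, where for each j ∈ {1,…,m−1} the shared node 1^j has two incoming edges: the edge n^j → 1^j of weight w_1^j (within C_j) and the edge (k−1)^{j+1} → 1^j of weight w_2^j (within C_{j+1}). If w_1^j < w_2^j for all j ∈ {1,…,m−1}, then the coordination game on N is weakly acyclic. -/

import Mathlib

open scoped Classical

namespace CG

/-- Payoff of node `i` in a coordination game on a weighted directed graph
with adjacency `adj` (an edge `j → i` is `adj j i`), edge weights `w`,
bonuses `β`, under the joint strategy `s`. -/
noncomputable def payoff {V M : Type} [Fintype V] (adj : V → V → Prop)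
    (w : V → V → ℝ) (β : V → M → ℕ) (s : V → M) (i : V) : ℝ :=
  (∑ j ∈ Finset.univ.filter (fun j => adj j i ∧ s j = s i), w j i) + (β i (s i) : ℝ)

/-- A joint strategy assigns to every node a colour from its colour set. -/
def Valid {V M : Type} (C : V → Finset M) (s : V → M) : Prop :=
  ∀ i, s i ∈ C i

/-- `s'` is a profitable deviation of the (non-empty) coalition
`K = {i | s i ≠ s' i}` from `s`. -/
def ProfDev {V M : Type} [Fintype V] (adj : V → V → Prop) (w : V → V → ℝ)
    (β : V → M → ℕ) (C : V → Finset M) (s s' : V → M) : Prop :=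
  Valid C s' ∧ s ≠ s' ∧
    ∀ i, s i ≠ s' i → payoff adj w β s i < payoff adj w β s' i

/-- A profitable deviation of a single player. -/
def UniDev {V M : Type} [Fintype V] (adj : V → V → Prop) (w : V → V → ℝ)
    (β : V → M → ℕ) (C : V → Finset M) (s s' : V → M) : Prop :=
  ProfDev adj w β C s s' ∧ ∃ i, ∀ j, j ≠ i → s j = s' j

/-- A Nash equilibrium: no single player has a profitable deviation. -/
def IsNash {V M : Type} [Fintype V] (adj : V → V → Prop) (w : V → V → ℝ)
    (β : V → M → ℕ) (C : V → Finset M) (s : V → M) : Prop :=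
  Valid C s ∧ ∀ s', ¬ UniDev adj w β C s s'

/-- A strong equilibrium: no coalition has a profitable deviation. -/
def IsStrong {V M : Type} [Fintype V] (adj : V → V → Prop) (w : V → V → ℝ)
    (β : V → M → ℕ) (C : V → Finset M) (s : V → M) : Prop :=
  Valid C s ∧ ∀ s', ¬ ProfDev adj w β C s s'

/-- There is a finite improvement path of length `L` starting at `s`
(each step a profitable single-player deviation) ending in a Nash equilibrium. -/
def ImpPath {V M : Type} [Fintype V] (adj : V → V → Prop) (w : V → V → ℝ)
    (β : V → M → ℕ) (C : V → Finset M) (s : V → M) (L : ℕ) : Prop :=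
  ∃ σ : ℕ → V → M, σ 0 = s ∧
    (∀ t, t < L → UniDev adj w β C (σ t) (σ (t + 1))) ∧
    IsNash adj w β C (σ L)

/-- There is a finite c-improvement path of length `L` starting at `s`
(each step a profitable coalition deviation) ending in a strong equilibrium. -/
def CImpPath {V M : Type} [Fintype V] (adj : V → V → Prop) (w : V → V → ℝ)
    (β : V → M → ℕ) (C : V → Finset M) (s : V → M) (L : ℕ) : Prop :=
  ∃ σ : ℕ → V → M, σ 0 = s ∧
    (∀ t, t < L → ProfDev adj w β C (σ t) (σ (t + 1))) ∧
    IsStrong adj w β C (σ L)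

/-- Adjacency of the simple cycle `1 → 2 → ⋯ → n → 1` on `Fin n`. -/
def cycAdj (n : ℕ) : Fin n → Fin n → Prop :=
  fun i j => (i.val + 1) % n = j.val

/-- Adjacency of a chain of `m` cycles, each of `n` nodes: `node j i` is the
`(i+1)`-st node of the `(j+1)`-st cycle (`0`-based indices). -/
def chainAdj {V : Type} (m n : ℕ) (node : ℕ → ℕ → V) : V → V → Prop :=
  fun u v => ∃ j i, j < m ∧ i < n ∧ u = node j i ∧ v = node j ((i + 1) % n)

/-- `node`, `k` describe an open chain of `m ≥ 2` simple cycles, each on `n ≥ 3`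
nodes, where consecutive cycles `C_j, C_{j+1}` share exactly the node
`node j 0 = node (j+1) (k j)` (with `1 ≤ k j < n`) and the cycles are
otherwise pairwise disjoint, and every vertex lies on some cycle. -/
def IsOpenChain {V : Type} (m n : ℕ) (node : ℕ → ℕ → V) (k : ℕ → ℕ) : Prop :=
  2 ≤ m ∧ 3 ≤ n ∧
  (∀ j, j + 1 < m → 1 ≤ k j ∧ k j < n) ∧
  (∀ j, j + 1 < m → node j 0 = node (j + 1) (k j)) ∧
  (∀ j i j' i', j < m → i < n → j' < m → i' < n → node j i = node j' i' →
      (j = j' ∧ i = i') ∨ (j' = j + 1 ∧ i = 0 ∧ i' = k j) ∨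
      (j = j' + 1 ∧ i' = 0 ∧ i = k j')) ∧
  (∀ v : V, ∃ j i, j < m ∧ i < n ∧ node j i = v)

/-- As `IsOpenChain`, but additionally the last cycle shares exactly the node
`node (m-1) 0 = node 0 (k (m-1))` with the first one. -/
def IsClosedChain {V : Type} (m n : ℕ) (node : ℕ → ℕ → V) (k : ℕ → ℕ) : Prop :=
  2 ≤ m ∧ 3 ≤ n ∧
  (∀ j, j < m → 1 ≤ k j ∧ k j < n) ∧
  (∀ j, j + 1 < m → node j 0 = node (j + 1) (k j)) ∧
  node (m - 1) 0 = node 0 (k (m - 1)) ∧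
  (∀ j i j' i', j < m → i < n → j' < m → i' < n → node j i = node j' i' →
      (j = j' ∧ i = i') ∨ (j' = j + 1 ∧ i = 0 ∧ i' = k j) ∨
      (j = j' + 1 ∧ i' = 0 ∧ i = k j') ∨
      (j = m - 1 ∧ j' = 0 ∧ i = 0 ∧ i' = k (m - 1)) ∨
      (j' = m - 1 ∧ j = 0 ∧ i' = 0 ∧ i = k (m - 1))) ∧
  (∀ v : V, ∃ j i, j < m ∧ i < n ∧ node j i = v)

section Gen
variable {V M : Type} [Fintype V]

noncomputable def pay (adj : V → V → Prop) (w : V → V → ℝ) (s : V → M) (v : V) (c : M) : ℝ :=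
  ∑ u ∈ Finset.univ.filter (fun u => adj u v ∧ s u = c), w u v

def Stb (adj : V → V → Prop) (w : V → V → ℝ) (C : V → Finset M) (s : V → M) (v : V) : Prop :=
  ∀ c ∈ C v, pay adj w s v c ≤ pay adj w s v (s v)

def Step (adj : V → V → Prop) (w : V → V → ℝ) (C : V → Finset M) (A : Set V)
    (s s' : V → M) : Prop :=
  ∃ v ∈ A, ∃ c ∈ C v, pay adj w s v (s v) < pay adj w s v c ∧ s' = Function.update s v c

def Reach (adj : V → V → Prop) (w : V → V → ℝ) (C : V → Finset M) (A : Set V) :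
    (V → M) → (V → M) → Prop :=
  Relation.ReflTransGen (Step adj w C A)

variable {adj : V → V → Prop} {w : V → V → ℝ} {C : V → Finset M}

theorem Reach.mono {A B : Set V} (h : A ⊆ B) {s s' : V → M}
    (hr : Reach adj w C A s s') : Reach adj w C B s s' := by
  refine Relation.ReflTransGen.mono ?_ _ _ hr
  rintro a b ⟨v, hv, r⟩
  exact ⟨v, h hv, r⟩

theorem Reach.off {A : Set V} {s s' : V → M}
    (hr : Reach adj w C A s s') (v : V) (hv : v ∉ A) : s' v = s v := by
  induction hr with
  | refl => rfl
  | tail _ h ih =>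
    obtain ⟨x, hx, c, _, _, rfl⟩ := h
    have : v ≠ x := by rintro rfl; exact hv hx
    simp [Function.update_of_ne this, ih]

theorem Stb.congr {s s' : V → M} {v : V} (h : Stb adj w C s v) (h1 : s' v = s v)
    (h2 : ∀ u, adj u v → s' u = s u) : Stb adj w C s' v := by
  have key : ∀ c, pay adj w s' v c = pay adj w s v c := by
    intro c
    unfold pay
    congr 1
    ext u
    simp only [Finset.mem_filter, Finset.mem_univ, true_and]
    constructor
    · rintro ⟨a, b⟩; exact ⟨a, by rw [← h2 u a]; exact b⟩
    · rintro ⟨a, b⟩; exact ⟨a, by rw [h2 u a]; exact b⟩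
  intro c hc
  rw [key, key, h1]
  exact h c hc

theorem pay_ord {v p : V} (hp : adj p v) (hu : ∀ u, adj u v → u = p) (s : V → M) (c : M) :
    pay adj w s v c = if s p = c then w p v else 0 := by
  unfold pay
  split_ifs with h
  · have : Finset.univ.filter (fun u => adj u v ∧ s u = c) = {p} := by
      ext u
      simp only [Finset.mem_filter, Finset.mem_univ, true_and, Finset.mem_singleton]
      constructor
      · rintro ⟨a, _⟩; exact hu u a
      · rintro rfl; exact ⟨hp, h⟩
    rw [this, Finset.sum_singleton]
  · have : Finset.univ.filter (fun u => adj u v ∧ s u = c) = ∅ := by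
      ext u
      simp only [Finset.mem_filter, Finset.mem_univ, true_and, Finset.notMem_empty, iff_false]
      rintro ⟨a, b⟩
      rw [hu u a] at b
      exact h b
    rw [this, Finset.sum_empty]

theorem pay_sh {v p q : V} (hp : adj p v) (hq : adj q v) (hpq : p ≠ q)
    (hu : ∀ u, adj u v → u = p ∨ u = q) (s : V → M) (c : M) :
    pay adj w s v c = (if s p = c then w p v else 0) + (if s q = c then w q v else 0) := by
  unfold pay
  have : Finset.univ.filter (fun u => adj u v ∧ s u = c)
      = ({p, q} : Finset V).filter (fun u => s u = c) := by
    ext u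
    simp only [Finset.mem_filter, Finset.mem_univ, true_and, Finset.mem_insert,
      Finset.mem_singleton]
    constructor
    · rintro ⟨a, b⟩; exact ⟨hu u a, b⟩
    · rintro ⟨rfl | rfl, b⟩
      · exact ⟨hp, b⟩
      · exact ⟨hq, b⟩
  rw [this, Finset.sum_filter, Finset.sum_pair hpq]

theorem ord_stb {v p : V} (hp : adj p v) (hu : ∀ u, adj u v → u = p) (hw : 0 ≤ w p v)
    {s : V → M} (h : s p = s v ∨ s p ∉ C v ∨ w p v = 0) : Stb adj w C s v := by
  intro c hc
  rw [pay_ord hp hu, pay_ord hp hu]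
  rcases h with h | h | h
  · rw [if_pos h]; split_ifs <;> linarith
  · have : s p ≠ c := by rintro rfl; exact h hc
    rw [if_neg this]; split_ifs <;> linarith
  · rw [h]; simp

theorem ord_step {v p : V} (hp : adj p v) (hu : ∀ u, adj u v → u = p) (hw : 0 ≤ w p v)
    {s : V → M} (h : ¬ (s p = s v ∨ s p ∉ C v ∨ w p v = 0)) :
    Step adj w C {v} s (Function.update s v (s p)) := by
  push Not at h
  obtain ⟨h1, h2, h3⟩ := h
  refine ⟨v, rfl, s p, h2, ?_, rfl⟩
  rw [pay_ord hp hu, pay_ord hp hu, if_pos rfl, if_neg h1]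
  exact lt_of_le_of_ne hw (Ne.symm h3)

theorem ord_fix {v p : V} (hp : adj p v) (hne : p ≠ v) (hu : ∀ u, adj u v → u = p)
    (hw : 0 ≤ w p v) (s : V → M) :
    ∃ s', Reach adj w C {v} s s' ∧ Stb adj w C s' v ∧ (s' v = s p ∨ s' v = s v) := by
  by_cases h : s p = s v ∨ s p ∉ C v ∨ w p v = 0
  · exact ⟨s, Relation.ReflTransGen.refl, ord_stb hp hu hw h, Or.inr rfl⟩
  · refine ⟨_, Relation.ReflTransGen.single (ord_step hp hu hw h), ?_, ?_⟩
    · apply ord_stb hp hu hw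
      left
      simp [Function.update_of_ne hne]
    · left; simp

theorem sh_stb1 {v p q : V} (hp : adj p v) (hq : adj q v) (hpq : p ≠ q)
    (hu : ∀ u, adj u v → u = p ∨ u = q) (hw : 0 ≤ w q v) (hlt : w q v < w p v)
    {s : V → M} (h : s p = s v) : Stb adj w C s v := by
  intro c hc
  rw [pay_sh hp hq hpq hu, pay_sh hp hq hpq hu, if_pos h]
  by_cases h1 : s p = c
  · rw [if_pos h1, ← h1, h]
  · rw [if_neg h1]; split_ifs <;> linarith

theorem sh_stb2 {v p q : V} (hp : adj p v) (hq : adj q v) (hpq : p ≠ q)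
    (hu : ∀ u, adj u v → u = p ∨ u = q) (hw : 0 ≤ w q v) (hlt : w q v < w p v)
    {s : V → M} (h : s p ∉ C v) (h' : s q = s v ∨ s q ∉ C v ∨ w q v = 0) :
    Stb adj w C s v := by
  intro c hc
  have : s p ≠ c := by rintro rfl; exact h hc
  rw [pay_sh hp hq hpq hu, pay_sh hp hq hpq hu, if_neg this]
  rcases h' with h' | h' | h'
  · rw [if_pos h']; split_ifs <;> linarith
  · have : s q ≠ c := by rintro rfl; exact h' hc
    rw [if_neg this]; split_ifs <;> linarith
  · rw [h']; split_ifs <;> linarith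

theorem sh_step1 {v p q : V} (hp : adj p v) (hq : adj q v) (hpq : p ≠ q)
    (hu : ∀ u, adj u v → u = p ∨ u = q) (hw : 0 ≤ w q v) (hlt : w q v < w p v)
    {s : V → M} (h : s p ∈ C v) (hne : s p ≠ s v) :
    Step adj w C {v} s (Function.update s v (s p)) := by
  refine ⟨v, rfl, s p, h, ?_, rfl⟩
  rw [pay_sh hp hq hpq hu, pay_sh hp hq hpq hu, if_neg hne, if_pos rfl]
  split_ifs <;> linarith

theorem sh_step2 {v p q : V} (hp : adj p v) (hq : adj q v) (hpq : p ≠ q)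
    (hu : ∀ u, adj u v → u = p ∨ u = q) (hw : 0 ≤ w q v) (hlt : w q v < w p v)
    {s : V → M} (h : s p ∉ C v) (hne : s p ≠ s v)
    (h' : ¬ (s q = s v ∨ s q ∉ C v ∨ w q v = 0)) :
    Step adj w C {v} s (Function.update s v (s q)) := by
  push Not at h'
  obtain ⟨h1, h2, h3⟩ := h'
  refine ⟨v, rfl, s q, h2, ?_, rfl⟩
  have hpos : 0 < w q v := lt_of_le_of_ne hw (Ne.symm h3)
  rw [pay_sh hp hq hpq hu, pay_sh hp hq hpq hu, if_neg hne, if_neg h1, if_pos rfl]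
  split_ifs <;> linarith

/-- propagation along a path `f a → f (a+1) → ⋯ → f b` of ordinary nodes -/
theorem seg_any (f : ℕ → V) (a : ℕ) (hw : ∀ u v, adj u v → 0 ≤ w u v) : ∀ b, a ≤ b →
    (∀ i i', a ≤ i → i ≤ b → a ≤ i' → i' ≤ b → f i = f i' → i = i') →
    (∀ i, a < i → i ≤ b → adj (f (i-1)) (f i) ∧ ∀ u, adj u (f i) → u = f (i-1)) →
    ∀ s : V → M, ∃ s', Reach adj w C {v | ∃ i, a < i ∧ i ≤ b ∧ v = f i} s s' ∧
      (∀ i, a < i → i ≤ b → Stb adj w C s' (f i)) ∧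
      ((∀ i, a + 1 < i → i ≤ b → Stb adj w C s (f i)) →
        (s' (f b) = s (f a) ∨ (a < b ∧ s' (f b) = s (f b)))) := by
  intro b hab
  induction b, hab using Nat.le_induction with
  | base =>
    intro _ _ s
    exact ⟨s, Relation.ReflTransGen.refl, fun i h h' => by omega, fun _ => Or.inl rfl⟩
  | succ b hab ih =>
    intro hinj hord s
    obtain ⟨s1, hr, hst, hd⟩ := ih (fun i i' h1 h2 h3 h4 => hinj i i' h1 (by omega) h3 (by omega))
      (fun i h1 h2 => hord i h1 (by omega)) s
    obtain ⟨hadj, hu⟩ := hord (b+1) (by omega) le_rfl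
    have hb : b + 1 - 1 = b := rfl
    rw [hb] at hadj hu
    have hne : f b ≠ f (b+1) := fun h => by
      have := hinj b (b+1) hab (by omega) (by omega) le_rfl h
      omega
    have hoff : ∀ i, a ≤ i → i ≤ b → f i ≠ f (b+1) := fun i h1 h2 h => by
      have := hinj i (b+1) h1 (by omega) (by omega) le_rfl h
      omega
    have hb1 : s1 (f (b+1)) = s (f (b+1)) := by
      apply hr.off
      rintro ⟨i, h1, h2, h3⟩
      exact hoff i h1.le h2 h3.symm
    have ha1 : s1 (f a) = s (f a) := by
      apply hr.off
      rintro ⟨i, h1, h2, h3⟩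
      have := hinj a i le_rfl (by omega) h1.le (by omega) h3
      omega
    have hsub : {v | ∃ i, a < i ∧ i ≤ b ∧ v = f i} ⊆ {v | ∃ i, a < i ∧ i ≤ b + 1 ∧ v = f i} := by
      rintro v ⟨i, h1, h2, h3⟩
      exact ⟨i, h1, by omega, h3⟩
    by_cases hsb : Stb adj w C s1 (f (b+1)) ∧ a < b ∧ s1 (f b) = s (f b)
    · refine ⟨s1, hr.mono hsub, ?_, ?_⟩
      · intro i h1 h2
        rcases Nat.lt_or_ge b i with h | h
        · have : i = b + 1 := by omega
          rw [this]; exact hsb.1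
        · exact hst i h1 h
      · intro _; right; exact ⟨by omega, hb1⟩
    · obtain ⟨s2, hr2, hst2, hd2⟩ := ord_fix (C := C) hadj hne hu (hw _ _ hadj) s1
      have hoff2 : ∀ v, v ≠ f (b+1) → s2 v = s1 v := fun v hv => hr2.off v hv
      refine ⟨s2, (hr.mono hsub).trans (hr2.mono ?_), ?_, ?_⟩
      · intro v hv
        exact ⟨b+1, by omega, le_rfl, hv⟩
      · intro i h1 h2
        rcases Nat.lt_or_ge b i with h | h
        · have : i = b + 1 := by omega
          rw [this]; exact hst2
        · refine (hst i h1 h).congr (hoff2 _ (hoff i h1.le h)) ?_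
          intro u hu'
          rw [(hord i h1 h2).2 u hu']
          exact hoff2 _ (hoff _ (by omega) (by omega))
      · intro hs
        rcases hd2 with hd2 | hd2
        · rcases hd (fun i h1 h2 => hs i h1 (by omega)) with h | ⟨h, h'⟩
          · left; rw [hd2, h]
          · exfalso
            apply hsb
            refine ⟨?_, h, h'⟩
            refine (hs (b+1) (by omega) le_rfl).congr hb1 ?_
            intro u hu'
            rw [hu u hu']; exact h'
        · right; exact ⟨by omega, by rw [hd2, hb1]⟩

theorem step_uni (hself : ∀ v, ¬ adj v v) {A : Set V} {s s' : V → M} (hs : Valid C s)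
    (h : Step adj w C A s s') : UniDev adj w (fun _ _ => 0) C s s' ∧ Valid C s' := by
  obtain ⟨v, _, c, hc, hlt, rfl⟩ := h
  have hv : Valid C (Function.update s v c) := by
    intro i
    by_cases hi : i = v
    · subst hi; simpa using hc
    · rw [Function.update_of_ne hi]; exact hs i
  have hne : s v ≠ c := by rintro rfl; exact lt_irrefl _ hlt
  refine ⟨⟨⟨hv, ?_, ?_⟩, v, ?_⟩, hv⟩
  · intro h
    apply hne
    have := congrFun h v
    simpa using this
  · intro i hi
    have hiv : i = v := by
      by_contra h
      apply hi
      rw [Function.update_of_ne h]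
    subst hiv
    have e1 : payoff adj w (fun _ _ => 0) s i = pay adj w s i (s i) := by
      simp [payoff, pay]
    have e2 : payoff adj w (fun _ _ => 0) (Function.update s i c) i = pay adj w s i c := by
      simp only [payoff, pay, Function.update_self, Nat.cast_zero, add_zero]
      congr 1
      ext u
      simp only [Finset.mem_filter, Finset.mem_univ, true_and]
      refine and_congr_right fun hu => ?_
      have : u ≠ i := by rintro rfl; exact hself _ hu
      rw [Function.update_of_ne this]
    rw [e1, e2]; exact hlt
  · intro j hj
    rw [Function.update_of_ne hj]

theorem stb_nash (hself : ∀ v, ¬ adj v v) {s : V → M} (hs : Valid C s)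
    (h : ∀ v, Stb adj w C s v) : IsNash adj w (fun _ _ => 0) C s := by
  refine ⟨hs, ?_⟩
  rintro s' ⟨⟨hv, hne, hp⟩, i, hi⟩
  have hsi : s i ≠ s' i := by
    intro h'
    apply hne
    funext j
    by_cases hj : j = i
    · rw [hj, h']
    · exact hi j hj
  have := hp i hsi
  have e1 : payoff adj w (fun _ _ => 0) s i = pay adj w s i (s i) := by
    simp [payoff, pay]
  have e2 : payoff adj w (fun _ _ => 0) s' i = pay adj w s i (s' i) := by
    simp only [payoff, pay, Nat.cast_zero, add_zero]
    congr 1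
    ext u
    simp only [Finset.mem_filter, Finset.mem_univ, true_and]
    refine and_congr_right fun hu => ?_
    have : u ≠ i := by rintro rfl; exact hself _ hu
    rw [hi u this]
  rw [e1, e2] at this
  exact absurd this (not_lt.mpr (h i _ (hv i)))

theorem reach_path (hself : ∀ v, ¬ adj v v) {A : Set V} {s s' : V → M}
    (hr : Reach adj w C A s s') (hstb : ∀ v, Stb adj w C s' v) :
    Valid C s → ∃ L, ImpPath adj w (fun _ _ => 0) C s L := by
  induction hr using Relation.ReflTransGen.head_induction_on with
  | refl =>
    intro hs
    exact ⟨0, fun _ => s', rfl, fun t ht => by omega, stb_nash hself hs hstb⟩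
  | @head a b h _ ih =>
    intro hs
    obtain ⟨h1, h2⟩ := step_uni hself hs h
    obtain ⟨L, σ, h0, hst, hN⟩ := ih h2
    refine ⟨L + 1, fun t => Nat.casesOn t a (fun t => σ t), rfl, ?_, hN⟩
    intro t ht
    cases t with
    | zero => simpa [h0] using h1
    | succ t => exact hst t (by omega)

/-- stabilising a block together with its entry node, when the entry only listens to the end -/
theorem block_stab {A : Set V} {X E : V} (hX : X ∉ A)
    (hT : ∀ s0 : V → M, (∀ v ∈ A, Stb adj w C s0 v) →
      ∃ s1, Reach adj w C A (Function.update s0 X (s0 E)) s1 ∧ (∀ v ∈ A, Stb adj w C s1 v) ∧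
      ∃ s2, Reach adj w C A (Function.update s1 X (s1 E)) s2 ∧ (∀ v ∈ A, Stb adj w C s2 v) ∧
        s2 E = s1 E)
    (s : V → M) (hs : ∀ v ∈ A, Stb adj w C s v)
    (hstep : ∀ t : V → M, (∀ u, u ∉ A → u ≠ X → t u = s u) → (t X = s X ∨ t X ∈ C X) →
      ¬ (t E = t X ∨ t E ∉ C X ∨ w E X = 0) →
      Step adj w C {X} t (Function.update t X (t E))) :
    ∃ s', Reach adj w C (insert X A) s s' ∧ (∀ v ∈ A, Stb adj w C s' v) ∧
      (s' E = s' X ∨ s' E ∉ C X ∨ w E X = 0) := by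
  by_cases h0 : s E = s X ∨ s E ∉ C X ∨ w E X = 0
  · exact ⟨s, Relation.ReflTransGen.refl, hs, h0⟩
  have st0 := hstep s (fun _ _ _ => rfl) (Or.inl rfl) h0
  obtain ⟨s1, r1, b1, s2, r2, b2, e2⟩ := hT s hs
  have hXs : ({X} : Set V) ⊆ insert X A := by rintro v rfl; exact Set.mem_insert _ _
  have hAs : A ⊆ insert X A := Set.subset_insert _ _
  have R1 : Reach adj w C (insert X A) s s1 :=
    (Reach.mono hXs (Relation.ReflTransGen.single st0)).trans (r1.mono hAs)
  by_cases h1 : s1 E = s1 X ∨ s1 E ∉ C X ∨ w E X = 0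
  · exact ⟨s1, R1, b1, h1⟩
  have x1 : s1 X = s E := by rw [r1.off X hX]; simp
  have st1 := hstep s1 (fun u hu hx => R1.off u (by simp [hu, hx]))
    (Or.inr (by rw [x1]; by_contra h; exact h0 (Or.inr (Or.inl h)))) h1
  refine ⟨s2, R1.trans ((Reach.mono hXs (Relation.ReflTransGen.single st1)).trans (r2.mono hAs)),
    b2, Or.inl ?_⟩
  rw [r2.off X hX]; simp [e2]

end Gen

section Chain
variable {V M : Type} [Fintype V] {m n : ℕ} {node : ℕ → ℕ → V} {k : ℕ → ℕ}

theorem pred_ord (hc : IsOpenChain m n node k) {j i : ℕ} (hj : j < m) (hi : 1 ≤ i) (hin : i < n)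
    {u : V} (h : chainAdj m n node u (node j i)) :
    u = node j (i-1) ∨ ∃ j', j = j' + 1 ∧ i = k j' ∧ u = node j' (n-1) := by
  obtain ⟨hm, hn, hk, hs, H, _⟩ := hc
  obtain ⟨j0, i0, h1, h2, rfl, h3⟩ := h
  have hlt : (i0 + 1) % n < n := Nat.mod_lt _ (by omega)
  have hmod : (i0 + 1 < n ∧ (i0 + 1) % n = i0 + 1) ∨ (i0 = n - 1 ∧ (i0 + 1) % n = 0) := by
    rcases Nat.lt_or_ge (i0+1) n with h | h
    · exact Or.inl ⟨h, Nat.mod_eq_of_lt h⟩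
    · have : i0 + 1 = n := by omega
      right; refine ⟨by omega, ?_⟩; rw [this]; simp
  rcases H j i j0 _ hj hin h1 hlt h3 with ⟨a, b⟩ | ⟨a, b, c⟩ | ⟨a, b, c⟩
  · left
    have : i0 = i - 1 := by omega
    rw [this, a]
  · omega
  · right
    have : i0 = n - 1 := by omega
    exact ⟨j0, a, c, by rw [this]⟩

theorem adj_succ (hc : IsOpenChain m n node k) {j i : ℕ} (hj : j < m) (hi : 1 ≤ i) (hin : i < n) :
    chainAdj m n node (node j (i-1)) (node j i) := by
  refine ⟨j, i-1, hj, by omega, rfl, ?_⟩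
  have : i - 1 + 1 = i := by omega
  rw [this, Nat.mod_eq_of_lt hin]

theorem adj_last (hc : IsOpenChain m n node k) {j : ℕ} (hj : j < m) :
    chainAdj m n node (node j (n-1)) (node j 0) := by
  have := hc.2.1
  refine ⟨j, n-1, hj, by omega, rfl, ?_⟩
  have : n - 1 + 1 = n := by omega
  rw [this, Nat.mod_self]

theorem pred_top (hc : IsOpenChain m n node k) {u : V}
    (h : chainAdj m n node u (node (m-1) 0)) : u = node (m-1) (n-1) := by
  obtain ⟨hm, hn, hk, hs, H, _⟩ := hc
  obtain ⟨j0, i0, h1, h2, rfl, h3⟩ := h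
  have hlt : (i0 + 1) % n < n := Nat.mod_lt _ (by omega)
  rcases H (m-1) 0 j0 _ (by omega) (by omega) h1 hlt h3 with ⟨a, b⟩ | ⟨a, b, c⟩ | ⟨a, b, c⟩
  · have : i0 = n - 1 := by
      by_contra hne
      rw [Nat.mod_eq_of_lt (by omega)] at b
      omega
    rw [this, a]
  · omega
  · have := hk j0 (by omega)
    omega

theorem no_self (hc : IsOpenChain m n node k) (v : V) : ¬ chainAdj m n node v v := by
  obtain ⟨hm, hn, hk, hs, H, _⟩ := hc
  rintro ⟨j, i, h1, h2, rfl, h3⟩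
  have hlt : (i + 1) % n < n := Nat.mod_lt _ (by omega)
  rcases H j i j _ h1 h2 h1 hlt h3 with ⟨a, b⟩ | ⟨a, b, c⟩ | ⟨a, b, c⟩
  · rcases Nat.lt_or_ge (i+1) n with h | h
    · rw [Nat.mod_eq_of_lt h] at b; omega
    · have : i + 1 = n := by omega
      rw [this, Nat.mod_self] at b; omega
  · omega
  · omega

theorem node_inj (hc : IsOpenChain m n node k) {j i i' : ℕ} (hj : j < m) (hi : i < n)
    (hi' : i' < n) (h : node j i = node j i') : i = i' := by
  rcases hc.2.2.2.2.1 j i j i' hj hi hj hi' h with ⟨a, b⟩ | ⟨a, b, c⟩ | ⟨a, b, c⟩ <;> omega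

def Blk (n : ℕ) (node : ℕ → ℕ → V) (j : ℕ) : Set V :=
  {v | ∃ j' i, j' ≤ j ∧ 1 ≤ i ∧ i < n ∧ v = node j' i}

theorem entry_notin (hc : IsOpenChain m n node k) {j : ℕ} (hj : j < m) :
    node j 0 ∉ Blk n node j := by
  rintro ⟨j', i, h1, h2, h3, h4⟩
  have hn := hc.2.1
  rcases hc.2.2.2.2.1 j 0 j' i hj (by omega) (by omega) h3 h4 with
    ⟨a, b⟩ | ⟨a, b, c⟩ | ⟨a, b, c⟩ <;> omega

theorem next_notin (hc : IsOpenChain m n node k) {j i : ℕ} (hj : j + 1 < m) (hi : i < n) :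
    node (j+1) i ∉ Blk n node j := by
  rintro ⟨j', i', h1, h2, h3, h4⟩
  rcases hc.2.2.2.2.1 (j+1) i j' i' hj hi (by omega) h3 h4 with
    ⟨a, b⟩ | ⟨a, b, c⟩ | ⟨a, b, c⟩ <;> omega

theorem blk_pred (hc : IsOpenChain m n node k) {j : ℕ} (hj : j < m) {u v : V}
    (hv : v ∈ Blk n node j) (h : chainAdj m n node u v) :
    u ∈ Blk n node j ∨ u = node j 0 := by
  obtain ⟨j', i, h1, h2, h3, rfl⟩ := hv
  have hn := hc.2.1
  rcases pred_ord hc (by omega) h2 h3 h with rfl | ⟨j'', rfl, rfl, rfl⟩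
  · by_cases hi : i = 1
    · subst hi
      by_cases hjj : j' = j
      · right; rw [hjj]
      · left
        have hk := hc.2.2.1 j' (by omega)
        exact ⟨j'+1, k j', by omega, hk.1, hk.2, hc.2.2.2.1 j' (by omega)⟩
    · left; exact ⟨j', i-1, h1, by omega, by omega, rfl⟩
  · left; exact ⟨j'', n-1, by omega, by omega, by omega, rfl⟩

variable {w : V → V → ℝ} {C : V → Finset M}

theorem main_ind (hc : IsOpenChain m n node k)
    (hw : ∀ u v, chainAdj m n node u v → 0 ≤ w u v)
    (hlt : ∀ j, j + 1 < m →
      w (node j (n - 1)) (node j 0) <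
        w (node (j + 1) (k j - 1)) (node (j + 1) (k j))) :
    ∀ j, j < m →
    (∀ s : V → M, ∃ s', Reach (chainAdj m n node) w C (Blk n node j) s s' ∧
      ∀ v ∈ Blk n node j, Stb (chainAdj m n node) w C s' v) ∧
    (∀ s0 : V → M, (∀ v ∈ Blk n node j, Stb (chainAdj m n node) w C s0 v) →
      ∃ s1, Reach (chainAdj m n node) w C (Blk n node j)
          (Function.update s0 (node j 0) (s0 (node j (n-1)))) s1 ∧
        (∀ v ∈ Blk n node j, Stb (chainAdj m n node) w C s1 v) ∧
      ∃ s2, Reach (chainAdj m n node) w C (Blk n node j)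
          (Function.update s1 (node j 0) (s1 (node j (n-1)))) s2 ∧
        (∀ v ∈ Blk n node j, Stb (chainAdj m n node) w C s2 v) ∧
        s2 (node j (n-1)) = s1 (node j (n-1))) := by
  have hn := hc.2.1
  intro j
  induction j with
  | zero =>
    intro hm
    have hblk : Blk n node 0 = {v | ∃ i, 0 < i ∧ i ≤ n-1 ∧ v = node 0 i} := by
      ext v
      constructor
      · rintro ⟨j', i, h1, h2, h3, h4⟩
        obtain rfl : j' = 0 := by omega
        exact ⟨i, by omega, by omega, h4⟩
      · rintro ⟨i, h1, h2, h3⟩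
        exact ⟨0, i, le_rfl, by omega, by omega, h3⟩
    have seg := seg_any (C := C) (node 0) 0 hw (n-1) (by omega)
      (fun i i' _ h2 _ h4 h => node_inj hc hm (by omega) (by omega) h)
      (fun i h1 h2 => ⟨adj_succ hc hm h1 (by omega), fun u hu => by
        rcases pred_ord hc hm h1 (by omega) hu with h | ⟨j', h, _⟩
        · exact h
        · omega⟩)
    rw [← hblk] at seg
    have tr : ∀ s : V → M, (∀ i, 0 < i → i ≤ n-1 → Stb (chainAdj m n node) w C s (node 0 i)) →
        ∀ v ∈ Blk n node 0, Stb (chainAdj m n node) w C s v := by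
      intro s h v hv
      rw [hblk] at hv
      obtain ⟨i, h1, h2, rfl⟩ := hv
      exact h i h1 h2
    refine ⟨fun s => ?_, fun s0 h0 => ?_⟩
    · obtain ⟨s', h1, h2, _⟩ := seg s
      exact ⟨s', h1, tr s' h2⟩
    · obtain ⟨s1, h1, h2, h3⟩ := seg (Function.update s0 (node 0 0) (s0 (node 0 (n-1))))
      have hE : s1 (node 0 (n-1)) = s0 (node 0 (n-1)) := by
        refine (h3 ?_).elim (fun h => ?_) (fun ⟨_, h⟩ => ?_)
        rotate_left
        · rw [h]; simp
        · rw [h, Function.update_of_ne]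
          intro h
          have := node_inj hc hm (by omega) (by omega) h
          omega
        · intro i hi1 hi2
          refine (h0 (node 0 i) ⟨0, i, le_rfl, by omega, by omega, rfl⟩).congr ?_ ?_
          · rw [Function.update_of_ne]
            intro h
            have := node_inj hc hm (by omega) (by omega) h
            omega
          · intro u hu
            rcases pred_ord hc hm (by omega) (by omega) hu with rfl | ⟨j', h, _⟩
            · rw [Function.update_of_ne]
              intro h
              have := node_inj hc hm (by omega) (by omega) h
              omega
            · omega
      have hX : s1 (node 0 0) = s0 (node 0 (n-1)) := by
        rw [h1.off _ (entry_notin hc hm)]; simp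
      refine ⟨s1, h1, tr s1 h2, s1, ?_, tr s1 h2, rfl⟩
      have : Function.update s1 (node 0 0) (s1 (node 0 (n-1))) = s1 := by
        rw [hE, ← hX]; simp
      rw [this]
      exact Relation.ReflTransGen.refl
  | succ j ih =>
    intro hj
    obtain ⟨ihS, ihT⟩ := ih (by omega)
    obtain ⟨hk1, hk2⟩ := hc.2.2.1 j hj
    have hsh := hc.2.2.2.1 j hj
    have hlt' := hlt j hj
    have hXb := entry_notin hc (show j < m by omega)
    have hpadj := adj_succ hc hj hk1 hk2
    have hqadj := adj_last hc (show j < m by omega)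
    rw [← hsh] at hlt' hpadj
    have hqw := hw _ _ hqadj
    have hqb : node j (n-1) ∈ Blk n node j := ⟨j, n-1, le_rfl, by omega, by omega, rfl⟩
    have hpb := next_notin hc hj (show k j - 1 < n by omega)
    have hpX : node (j+1) (k j - 1) ≠ node j 0 := by
      rw [hsh]; intro h
      have := node_inj hc hj (by omega) (by omega) h
      omega
    have hpq : node (j+1) (k j - 1) ≠ node j (n-1) := by
      intro h; rw [h] at hpb; exact hpb hqb
    have hXu : ∀ u, chainAdj m n node u (node j 0) →
        u = node (j+1) (k j - 1) ∨ u = node j (n-1) := by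
      intro u hu
      rw [hsh] at hu
      rcases pred_ord hc hj hk1 hk2 hu with h | ⟨j', h1, h2, h3⟩
      · exact Or.inl h
      · obtain rfl : j = j' := by omega
        exact Or.inr h3
    -- the middle part
    have U : ∀ s : V → M, ∃ s', Reach (chainAdj m n node) w C (insert (node j 0) (Blk n node j)) s s' ∧
        (∀ v ∈ Blk n node j, Stb (chainAdj m n node) w C s' v) ∧
        Stb (chainAdj m n node) w C s' (node j 0) := by
      intro s
      have sub1 : ({node j 0} : Set V) ⊆ insert (node j 0) (Blk n node j) := by
        rintro v rfl; exact Set.mem_insert _ _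
      have sub2 : Blk n node j ⊆ insert (node j 0) (Blk n node j) := Set.subset_insert _ _
      by_cases hm : s (node (j+1) (k j - 1)) = s (node j 0)
      · obtain ⟨s', r, b⟩ := ihS s
        refine ⟨s', r.mono sub2, b, sh_stb1 hpadj hqadj hpq hXu hqw hlt' ?_⟩
        rw [r.off _ hpb, r.off _ hXb, hm]
      by_cases hav : s (node (j+1) (k j - 1)) ∈ C (node j 0)
      · have st := sh_step1 hpadj hqadj hpq hXu hqw hlt' hav hm
        obtain ⟨s', r, b⟩ := ihS (Function.update s (node j 0) (s (node (j+1) (k j - 1))))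
        refine ⟨s', (Reach.mono sub1 (Relation.ReflTransGen.single st)).trans (r.mono sub2), b,
          sh_stb1 hpadj hqadj hpq hXu hqw hlt' ?_⟩
        rw [r.off _ hpb, r.off _ hXb, Function.update_of_ne hpX]; simp
      · obtain ⟨s1, r1, b1⟩ := ihS s
        have e1 := r1.off _ hpb
        have e2 := r1.off _ hXb
        obtain ⟨s2, r2, b2, ok⟩ := block_stab hXb ihT s1 b1 (by
          intro t ht htX hno
          have e3 := ht _ hpb hpX
          refine sh_step2 hpadj hqadj hpq hXu hqw hlt' (by rw [e3, e1]; exact hav) ?_ hno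
          rw [e3, e1]
          rcases htX with h | h
          · rw [h, e2]; exact hm
          · intro h'; rw [← h'] at h; exact hav h)
        refine ⟨s2, (r1.mono sub2).trans r2, b2, sh_stb2 hpadj hqadj hpq hXu hqw hlt' ?_ ok⟩
        rw [r2.off _ (by simp [hpX, hpb]), e1]; exact hav
    have ordp : ∀ i, 1 ≤ i → i < n → i ≠ k j → ∀ u, chainAdj m n node u (node (j+1) i) →
        u = node (j+1) (i-1) := by
      intro i h1 h2 h3 u hu
      rcases pred_ord hc hj h1 h2 hu with h | ⟨j', h1, h2, h3⟩
      · exact h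
      · obtain rfl : j = j' := by omega
        omega
    have seg1 := seg_any (C := C) (node (j+1)) 0 hw (k j - 1) (by omega)
      (fun i i' _ h2 _ h4 h => node_inj hc hj (by omega) (by omega) h)
      (fun i h1 h2 => ⟨adj_succ hc hj h1 (by omega), ordp i h1 (by omega) (by omega)⟩)
    have seg2 := seg_any (C := C) (node (j+1)) (k j) hw (n-1) (by omega)
      (fun i i' _ h2 _ h4 h => node_inj hc hj (by omega) (by omega) h)
      (fun i h1 h2 => ⟨adj_succ hc hj (by omega) (by omega), ordp i (by omega) (by omega) (by omega)⟩)
    -- splitting the block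
    have split : ∀ s : V → M, (∀ i, 0 < i → i ≤ k j - 1 → Stb (chainAdj m n node) w C s (node (j+1) i)) →
        (∀ v ∈ Blk n node j, Stb (chainAdj m n node) w C s v) →
        Stb (chainAdj m n node) w C s (node j 0) →
        (∀ i, k j < i → i ≤ n-1 → Stb (chainAdj m n node) w C s (node (j+1) i)) →
        ∀ v ∈ Blk n node (j+1), Stb (chainAdj m n node) w C s v := by
      rintro s a1 a2 a3 a4 v ⟨j', i, h1, h2, h3, rfl⟩
      rcases Nat.lt_or_ge j j' with h | h
      · obtain rfl : j' = j + 1 := by omega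
        rcases lt_trichotomy i (k j) with h | h | h
        · exact a1 i h2 (by omega)
        · rw [h, ← hsh]; exact a3
        · exact a4 i h (by omega)
      · exact a2 _ ⟨j', i, h, h2, h3, rfl⟩
    have subS1 : {v | ∃ i, 0 < i ∧ i ≤ k j - 1 ∧ v = node (j+1) i} ⊆ Blk n node (j+1) := by
      rintro v ⟨i, h1, h2, h3⟩; exact ⟨j+1, i, le_rfl, h1, by omega, h3⟩
    have subS2 : {v | ∃ i, k j < i ∧ i ≤ n-1 ∧ v = node (j+1) i} ⊆ Blk n node (j+1) := by
      rintro v ⟨i, h1, h2, h3⟩; exact ⟨j+1, i, le_rfl, by omega, by omega, h3⟩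
    have subU : insert (node j 0) (Blk n node j) ⊆ Blk n node (j+1) := by
      rintro v (rfl | ⟨j', i, h1, h2, h3, h4⟩)
      · exact ⟨j+1, k j, le_rfl, hk1, hk2, hsh⟩
      · exact ⟨j', i, by omega, h2, h3, h4⟩
    have nodeU : ∀ i, i < n → i ≠ k j → node (j+1) i ∉ insert (node j 0) (Blk n node j) := by
      rintro i h1 h2 (h | h)
      · rw [hsh] at h; exact h2 (node_inj hc hj h1 hk2 h)
      · exact next_notin hc hj h1 h
    have nodeS1 : ∀ i, i < n → (i = 0 ∨ k j ≤ i) →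
        node (j+1) i ∉ {v | ∃ i, 0 < i ∧ i ≤ k j - 1 ∧ v = node (j+1) i} := by
      rintro i h1 h2 ⟨i', h3, h4, h5⟩
      have := node_inj hc hj h1 (by omega) h5
      omega
    have nodeS2 : ∀ i, i < n → i ≤ k j →
        node (j+1) i ∉ {v | ∃ i, k j < i ∧ i ≤ n-1 ∧ v = node (j+1) i} := by
      rintro i h1 h2 ⟨i', h3, h4, h5⟩
      have := node_inj hc hj h1 (by omega) h5
      omega
    have blkS1 : ∀ v ∈ insert (node j 0) (Blk n node j),
        v ∉ {v | ∃ i, 0 < i ∧ i ≤ k j - 1 ∧ v = node (j+1) i} := by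
      rintro v hv ⟨i', h3, h4, rfl⟩
      exact nodeU i' (by omega) (by omega) hv
    have blkS2 : ∀ v ∈ insert (node j 0) (Blk n node j),
        v ∉ {v | ∃ i, k j < i ∧ i ≤ n-1 ∧ v = node (j+1) i} := by
      rintro v hv ⟨i', h3, h4, rfl⟩
      exact nodeU i' (by omega) (by omega) hv
    have blkp : ∀ v ∈ Blk n node j, ∀ u, chainAdj m n node u v →
        u ∈ insert (node j 0) (Blk n node j) := by
      intro v hv u hu
      rcases blk_pred hc (by omega) hv hu with h | h
      · exact Or.inr h
      · exact Or.inl h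
    -- the full pass
    have pass : ∀ s : V → M, ∃ s1 s2 s3,
        Reach (chainAdj m n node) w C (Blk n node (j+1)) s s3 ∧
        (∀ v ∈ Blk n node (j+1), Stb (chainAdj m n node) w C s3 v) ∧
        s3 (node j 0) = s2 (node j 0) ∧ 
        (∀ i, k j < i → i < n → s2 (node (j+1) i) = s (node (j+1) i)) ∧
        ((∀ i, k j + 1 < i → i ≤ n-1 → Stb (chainAdj m n node) w C s2 (node (j+1) i)) →
        (s3 (node (j+1) (n-1)) = s2 (node j 0) ∨
          (k j < n-1 ∧ s3 (node (j+1) (n-1)) = s2 (node (j+1) (n-1))))) ∧ s1 = s2 := by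
      intro s
      obtain ⟨s1, r1, b1, _⟩ := seg1 s
      obtain ⟨s2, r2, b2, b2'⟩ := U s1
      obtain ⟨s3, r3, b3, d3⟩ := seg2 s2
      have eX : s3 (node j 0) = s2 (node j 0) := r3.off _ (blkS2 _ (Set.mem_insert _ _))
      refine ⟨s2, s2, s3, (r1.mono subS1).trans ((r2.mono subU).trans (r3.mono subS2)), ?_, eX, ?_,
        ?_, rfl⟩
      · apply split s3 _ _ _ b3
        · intro i h1 h2
          refine (b1 i h1 h2).congr ?_ ?_
          · rw [r3.off _ (nodeS2 i (by omega) (by omega)), r2.off _ (nodeU i (by omega) (by omega))]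
          · intro u hu
            rw [ordp i h1 (by omega) (by omega) u hu]
            rw [r3.off _ (nodeS2 (i-1) (by omega) (by omega)),
              r2.off _ (nodeU (i-1) (by omega) (by omega))]
        · intro v hv
          exact (b2 v hv).congr (r3.off _ (blkS2 _ (Or.inr hv)))
            (fun u hu => r3.off _ (blkS2 _ (blkp v hv u hu)))
        · refine b2'.congr eX ?_
          intro u hu
          rcases hXu u hu with rfl | rfl
          · exact r3.off _ (nodeS2 _ (by omega) (by omega))
          · exact r3.off _ (blkS2 _ (Or.inr hqb))
      · intro i h1 h2
        rw [r2.off _ (nodeU i h2 (by omega)), r1.off _ (nodeS1 i h2 (by omega))]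
      · rw [hsh]; exact d3
    refine ⟨fun s => ?_, fun s0 h0 => ?_⟩
    · obtain ⟨_, _, s3, r, b, _⟩ := pass s
      exact ⟨s3, r, b⟩
    · obtain ⟨_, s2, s3, r, b, eX, e2, d, _⟩ :=
        pass (Function.update s0 (node (j+1) 0) (s0 (node (j+1) (n-1))))
      have upd : ∀ (s : V → M) c i, 1 ≤ i → i < n →
          Function.update s (node (j+1) 0) c (node (j+1) i) = s (node (j+1) i) := by
        intro s c i h1 h2
        rw [Function.update_of_ne]
        intro h
        have := node_inj hc hj h2 (by omega) h
        omega
      have hX' : s3 (node (j+1) 0) = s0 (node (j+1) (n-1)) := by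
        rw [r.off _ (entry_notin hc hj)]; simp
      refine ⟨s3, r, b, ?_⟩
      by_cases hg : s3 (node (j+1) (n-1)) = s0 (node (j+1) (n-1))
      · refine ⟨s3, ?_, b, rfl⟩
        have : Function.update s3 (node (j+1) 0) (s3 (node (j+1) (n-1))) = s3 := by
          rw [hg, ← hX']; simp
        rw [this]
        exact Relation.ReflTransGen.refl
      have hgX : s3 (node (j+1) (n-1)) = s3 (node j 0) := by
        refine (d ?_).elim (fun h => ?_) (fun ⟨h, h'⟩ => ?_)
        rotate_left
        · rw [h, eX]
        · exfalso; apply hg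
          rw [h', e2 _ h (by omega), upd _ _ _ (by omega) (by omega)]
        · intro i h1 h2
          refine (h0 (node (j+1) i) ⟨j+1, i, le_rfl, by omega, by omega, rfl⟩).congr ?_ ?_
          · rw [e2 i (by omega) (by omega), upd _ _ _ (by omega) (by omega)]
          · intro u hu
            rw [ordp i (by omega) (by omega) (by omega) u hu,
              e2 _ (by omega) (by omega), upd _ _ _ (by omega) (by omega)]
      obtain ⟨s5, r5, b5, d5⟩ :=
        seg1 (Function.update s3 (node (j+1) 0) (s3 (node (j+1) (n-1))))
      have d5' := d5 (by
        intro i h1 h2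
        refine (b (node (j+1) i) ⟨j+1, i, le_rfl, by omega, by omega, rfl⟩).congr ?_ ?_
        · rw [upd _ _ _ (by omega) (by omega)]
        · intro u hu
          rw [ordp i (by omega) (by omega) (by omega) u hu, upd _ _ _ (by omega) (by omega)])
      have hk5 : ∀ i, k j ≤ i → i < n → s5 (node (j+1) i) = s3 (node (j+1) i) := by
        intro i h1 h2
        rw [r5.off _ (nodeS1 i h2 (Or.inr h1)), upd _ _ _ (by omega) h2]
      have hU5 : ∀ v ∈ insert (node j 0) (Blk n node j), s5 v = s3 v := by
        intro v hv
        rw [r5.off _ (blkS1 v hv), Function.update_of_ne]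
        rintro rfl
        exact nodeU 0 (by omega) (by omega) hv
      refine ⟨s5, r5.mono subS1, ?_, hk5 _ (by omega) (by omega)⟩
      apply split s5 b5
      · intro v hv
        exact (b v (subU (Or.inr hv))).congr (hU5 v (Or.inr hv))
          (fun u hu => hU5 u (blkp v hv u hu))
      · have hX5 := hU5 _ (Set.mem_insert (node j 0) (Blk n node j))
        rcases d5' with h | ⟨h, h'⟩
        · apply sh_stb1 hpadj hqadj hpq hXu hqw hlt'
          rw [h, hX5, ← hgX]; simp
        · refine (b (node j 0) (subU (Set.mem_insert _ _))).congr hX5 ?_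
          intro u hu
          rcases hXu u hu with rfl | rfl
          · rw [h', upd _ _ _ (by omega) (by omega)]
          · exact hU5 _ (Or.inr hqb)
      · intro i h1 h2
        refine (b (node (j+1) i) ⟨j+1, i, le_rfl, by omega, by omega, rfl⟩).congr
          (hk5 i (by omega) (by omega)) ?_
        intro u hu
        rw [ordp i (by omega) (by omega) (by omega) u hu]
        exact hk5 _ (by omega) (by omega)

end Chain

/-- A coordination game without bonuses on a weighted open chain of cycles in
which, at every shared node, the weight `w₁ʲ` of the incoming edge from within
the earlier cycle is smaller than the weight `w₂ʲ` of the incoming edge from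
within the later cycle, is weakly acyclic. -/
theorem weighted_open_chain_w1_lt_w2_weakly_acyclic
    {V : Type} [Fintype V] {M : Type} [Fintype M]
    (m n : ℕ) (node : ℕ → ℕ → V) (k : ℕ → ℕ)
    (hchain : IsOpenChain m n node k)
    (w : V → V → ℝ) (hw : ∀ u v, chainAdj m n node u v → 0 ≤ w u v)
    (hlt : ∀ j, j + 1 < m →
      w (node j (n - 1)) (node j 0) <
        w (node (j + 1) (k j - 1)) (node (j + 1) (k j)))
    (C : V → Finset M) (hC : ∀ i, (C i).Nonempty) :
    ∀ s : V → M, Valid C s →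
      ∃ L, ImpPath (chainAdj m n node) w (fun _ _ => 0) C s L := by
  intro s hs
  have hm := hchain.1
  have hn := hchain.2.1
  obtain ⟨hS, hT⟩ := main_ind (C := C) hchain hw hlt (m-1) (by omega)
  obtain ⟨s1, r1, b1⟩ := hS s
  have hadj := adj_last hchain (show m - 1 < m by omega)
  have hu : ∀ u, chainAdj m n node u (node (m-1) 0) → u = node (m-1) (n-1) :=
    fun u h => pred_top hchain h
  obtain ⟨s2, r2, b2, ok⟩ := block_stab (entry_notin hchain (by omega)) hT s1 b1
    (fun t _ _ hno => ord_step hadj hu (hw _ _ hadj) hno)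
  refine reach_path (no_self hchain) (A := Set.univ)
    ((r1.mono (Set.subset_univ _)).trans (r2.mono (Set.subset_univ _))) ?_ hs
  intro v
  obtain ⟨j, i, h1, h2, rfl⟩ := hchain.2.2.2.2.2 v
  rcases Nat.eq_zero_or_pos i with rfl | hi
  · by_cases hj : j = m - 1
    · subst hj
      exact ord_stb hadj hu (hw _ _ hadj) ok
    · have hk := hchain.2.2.1 j (by omega)
      exact b2 _ ⟨j+1, k j, by omega, hk.1, hk.2, hchain.2.2.2.1 j (by omega)⟩
  · exact b2 _ ⟨j, i, by omega, hi, h2, rfl⟩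

end CG
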